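/- Suppose a, b ∈ C¹(0,D) ∩ C[0,D] and a > 0 on (0,D). Set H̄ = { h : h(0) = 0, h ∈ C²(0,D) ∩ C[0,D], h < 0 on (0,D) } and R̄(h)(x) = −(a h' + b h)'(x)/h(x). Then: (1) sup over h ∈ H̄ of inf_{x∈(0,D)} R̄(h)(x) ≥ λ₀, with equality whenever μ(0,D) = ∞; and (2) in general λ₀ = sup over h ∈ H* of inf_{x∈(0,D)} R̄(h)(x), where H* = { h ∈ C²(0,D) ∩ C[0,D] : h(0) = 0, h < 0 on (0,D), and h' < −(b/a)h on (0,D) }, and this supremum is attained by some h ∈ H*. -/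

import Mathlib

/-!
The formula rests on the first-order system behind the eigenvalue equation. With `m = e^C / a`, write
`f = -(a h' + b h)` and `w = e^C h`; then `w' = -m f`, and `R̄(h) = f' / h`.

*Upper bound for `R̄`* (`le_lam0_of_Rbar`, `iInf_Rbar_le`). If `f > 0` and `R̄(h) ≥ l > 0`, the function
`P = l w / f ≤ 0` satisfies the Riccati inequality `P' ≤ -l m - e^{-C} P²`. Completing the square
gives `l m φ² + (φ² P)' ≤ e^C φ'²` for each test function `φ`, whence `l ≤ λ₀`. The condition `f > 0`
is part of the definition of `H*`; for `h ∈ H̄` it follows from `μ(0, D) = ∞`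
(`pos_of_mu_infinite`), since otherwise `w` would tend to `+∞`, against `h < 0`.

*Attainment* (`extremal`). Let `f_l` solve `(e^C f')' = -l m f` with `f(0) = 1` and `(e^C f')(0) = 0`.
As `m` is merely integrable at the endpoints, the solution is built as the Volterra power series
in `l`, which also makes it continuous in `l`. For `l < λ₀` it is nonnegative (`eigF_nonneg`): cutting it
off at a first zero would give Rayleigh quotient `l`; the kink created there is smoothed in
`cutoff`. Letting `l ↑ λ₀`, the solution `f` for `l = λ₀` is nonnegative, hence positive by
strict monotonicity (`eigF_pos`). Then `h = -e^{-C} ∫_0^x m f` is in `H*` and `R̄(h) = λ₀` identically.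
Finiteness of `λ₀` (`lam0_ne_top`) comes from an explicit test function.
-/

open MeasureTheory Set Filter Topology ENNReal

noncomputable section

/-- The open interval `(0, D)` in `ℝ`, where `D : ℝ≥0∞` may be infinite. -/
def ooI (D : ℝ≥0∞) : Set ℝ := {x : ℝ | 0 < x ∧ ENNReal.ofReal x < D}

/-- The interval `[0, D)` in `ℝ`. -/
def coI (D : ℝ≥0∞) : Set ℝ := {x : ℝ | 0 ≤ x ∧ ENNReal.ofReal x < D}

/-- The interval `[0, D]` in `ℝ` (conventionally `[0, ∞)` when `D = ∞`). -/
def ccI (D : ℝ≥0∞) : Set ℝ := {x : ℝ | 0 ≤ x ∧ ENNReal.ofReal x ≤ D}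

/-- `C(x) = ∫_0^x b(u)/a(u) du`. -/
def Cf (a b : ℝ → ℝ) (x : ℝ) : ℝ := ∫ u in Set.Ioo 0 x, b u / a u

/-- The measure `μ(dx) = (e^{C(x)}/a(x)) dx` on `(0, D)`. -/
def muM (a b : ℝ → ℝ) (D : ℝ≥0∞) : Measure ℝ :=
  (volume.restrict (ooI D)).withDensity fun x => ENNReal.ofReal (Real.exp (Cf a b x) / a x)

/-- The measure `ν(dx) = e^{-C(x)} dx` on `(0, D)`. -/
def nuM (a b : ℝ → ℝ) (D : ℝ≥0∞) : Measure ℝ :=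
  (volume.restrict (ooI D)).withDensity fun x => ENNReal.ofReal (Real.exp (-Cf a b x))

/-- Hypothesis (1.0): `a`, `b` Borel measurable, `a > 0` on `(0,D)`, and `b/a`, `e^C/a`
locally integrable on `[0, D]`. -/
def Hyp (a b : ℝ → ℝ) (D : ℝ≥0∞) : Prop :=
  Measurable a ∧ Measurable b ∧ (∀ x ∈ ooI D, 0 < a x) ∧
    ∀ p : ℝ, 0 ≤ p → ENNReal.ofReal p ≤ D →
      IntegrableOn (fun u => b u / a u) (Set.Icc 0 p) ∧
      IntegrableOn (fun u => Real.exp (Cf a b u) / a u) (Set.Icc 0 p)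

/-- `f ∈ C¹(0,D) ∩ C[0,D]`. -/
def C1C (D : ℝ≥0∞) (f : ℝ → ℝ) : Prop :=
  ContinuousOn f (ccI D) ∧ (∀ x ∈ ooI D, DifferentiableAt ℝ f x) ∧
    ContinuousOn (deriv f) (ooI D)

/-- The Dirichlet form `D(f) = ∫_0^D e^{C} f'^2 dx`. -/
def Dform (a b : ℝ → ℝ) (D : ℝ≥0∞) (f : ℝ → ℝ) : ℝ≥0∞ :=
  ∫⁻ x in ooI D, ENNReal.ofReal (Real.exp (Cf a b x) * deriv f x ^ 2)

/-- `μ(f²)`. -/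
def muL2 (a b : ℝ → ℝ) (D : ℝ≥0∞) (f : ℝ → ℝ) : ℝ≥0∞ :=
  ∫⁻ x, ENNReal.ofReal (f x ^ 2) ∂(muM a b D)

/-- The ND (Neumann at `0`, Dirichlet at `D`) principal eigenvalue `λ₀`, defined with
compactly supported test functions. -/
def lam0 (a b : ℝ → ℝ) (D : ℝ≥0∞) : ℝ≥0∞ :=
  sInf {r | ∃ f : ℝ → ℝ, C1C D f ∧
    (∃ p : ℝ, 0 ≤ p ∧ ENNReal.ofReal p < D ∧ ∀ x, p < x → f x = 0) ∧
    (D ≠ ∞ → f D.toReal = 0) ∧ muL2 a b D f = 1 ∧ r = Dform a b D f}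

/-- `h ∈ C²(0,D) ∩ C[0,D]`. -/
def C2C (D : ℝ≥0∞) (h : ℝ → ℝ) : Prop :=
  ContinuousOn h (ccI D) ∧ (∀ x ∈ ooI D, DifferentiableAt ℝ h x) ∧
    (∀ x ∈ ooI D, DifferentiableAt ℝ (deriv h) x) ∧
    ContinuousOn (deriv (deriv h)) (ooI D)

/-- The operator `R̄(h)(x) = -(a h' + b h)'(x) / h(x)`. -/
def Rbar (a b : ℝ → ℝ) (h : ℝ → ℝ) (x : ℝ) : ℝ :=
  -deriv (fun y => a y * deriv h y + b y * h y) x / h x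

/-- The class `H̄`. -/
def Hbar (D : ℝ≥0∞) : Set (ℝ → ℝ) :=
  {h | h 0 = 0 ∧ C2C D h ∧ ∀ x ∈ ooI D, h x < 0}

/-- The class `H*`. -/
def Hstar (a b : ℝ → ℝ) (D : ℝ≥0∞) : Set (ℝ → ℝ) :=
  {h | C2C D h ∧ h 0 = 0 ∧ (∀ x ∈ ooI D, h x < 0) ∧
    ∀ x ∈ ooI D, deriv h x < -(b x / a x) * h x}

/-! ### The Volterra series -/

/-- Coefficients `I_k` of the expansion `f_l = ∑ (-l)^k I_k` of the solution of
`f(x) = 1 - l ∫_0^x n(s) ∫_0^s m f`. -/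
def volI (m n : ℝ → ℝ) : ℕ → ℝ → ℝ
  | 0 => fun _ => 1
  | k + 1 => fun x => ∫ s in (0 : ℝ)..x, n s * ∫ t in (0 : ℝ)..s, m t * volI m n k t

/-- The function `f_l`, written as a power series in the spectral parameter `l`. -/
def volF (m n : ℝ → ℝ) (l : ℝ) (x : ℝ) : ℝ := ∑' k, (-l) ^ k * volI m n k x

/-- The majorant `K(x) = ∫_0^x n(s) ∫_0^s m`, which gives `0 ≤ I_k ≤ K^k / k!`. -/
def volK (m n : ℝ → ℝ) (x : ℝ) : ℝ := ∫ s in (0 : ℝ)..x, n s * ∫ t in (0 : ℝ)..s, m t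

lemma volI_continuous {m n : ℝ → ℝ} (hm : ∀ x y, IntervalIntegrable m volume x y)
    (hn : Continuous n) (k : ℕ) : Continuous (volI m n k) := by
  induction k with
  | zero => exact continuous_const
  | succ k ih =>
    have h1 : Continuous fun s => ∫ t in (0 : ℝ)..s, m t * volI m n k t :=
      intervalIntegral.continuous_primitive
        (fun x y => (hm x y).mul_continuousOn ih.continuousOn) 0
    exact intervalIntegral.continuous_primitive
      (fun x y => (hn.mul h1).intervalIntegrable x y) 0

lemma volK_hasDerivAt {m n : ℝ → ℝ} (hm : ∀ x y, IntervalIntegrable m volume x y)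
    (hn : Continuous n) (x : ℝ) :
    HasDerivAt (volK m n) (n x * ∫ t in (0 : ℝ)..x, m t) x := by
  have h1 : Continuous fun s => n s * ∫ t in (0 : ℝ)..s, m t :=
    hn.mul (intervalIntegral.continuous_primitive hm 0)
  exact intervalIntegral.integral_hasDerivAt_right (h1.intervalIntegrable _ _)
    (h1.stronglyMeasurableAtFilter _ _) h1.continuousAt

lemma volK_mono {m n : ℝ → ℝ} (hm : ∀ x y, IntervalIntegrable m volume x y)
    (hm0 : ∀ x, 0 ≤ m x) (hn : Continuous n) (hn0 : ∀ x, 0 ≤ n x) :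
    MonotoneOn (volK m n) (Ici 0) := by
  apply monotoneOn_of_deriv_nonneg (convex_Ici 0)
  · exact fun x _ => (volK_hasDerivAt hm hn x).continuousAt.continuousWithinAt
  · exact fun x _ => (volK_hasDerivAt hm hn x).differentiableAt.differentiableWithinAt
  · intro x hx
    rw [interior_Ici] at hx
    rw [(volK_hasDerivAt hm hn x).deriv]
    exact mul_nonneg (hn0 x) (intervalIntegral.integral_nonneg (le_of_lt hx) fun t _ => hm0 t)

lemma volI_bound {m n : ℝ → ℝ} (hm : ∀ x y, IntervalIntegrable m volume x y)
    (hm0 : ∀ x, 0 ≤ m x) (hn : Continuous n) (hn0 : ∀ x, 0 ≤ n x) (k : ℕ) :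
    ∀ x, 0 ≤ x → 0 ≤ volI m n k x ∧ volI m n k x ≤ volK m n x ^ k / k.factorial := by
  have hK0 : volK m n 0 = 0 := by simp [volK]
  induction k with
  | zero => intro x _; simp [volI]
  | succ k ih =>
    intro x hx
    have hI := volI_continuous hm hn k
    have hmI : ∀ x y, IntervalIntegrable (fun t => m t * volI m n k t) volume x y :=
      fun x y => (hm x y).mul_continuousOn hI.continuousOn
    have hJ : Continuous fun s => ∫ t in (0 : ℝ)..s, m t * volI m n k t :=
      intervalIntegral.continuous_primitive hmI 0
    have hM : Continuous fun s => ∫ t in (0 : ℝ)..s, m t :=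
      intervalIntegral.continuous_primitive hm 0
    have hK : Continuous (volK m n) :=
      continuous_iff_continuousAt.2 fun x => (volK_hasDerivAt hm hn x).continuousAt
    constructor
    · refine intervalIntegral.integral_nonneg hx fun s hs => mul_nonneg (hn0 s) ?_
      exact intervalIntegral.integral_nonneg hs.1 fun t ht => mul_nonneg (hm0 t) (ih t ht.1).1
    · have hd : ∀ s, HasDerivAt (fun s => volK m n s ^ (k + 1) / (k + 1).factorial)
          ((n s * ∫ t in (0 : ℝ)..s, m t) * (volK m n s ^ k / k.factorial)) s := by
        intro s
        refine (((volK_hasDerivAt hm hn s).fun_pow (k + 1)).div_const _).congr_deriv ?_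
        rw [Nat.factorial_succ]
        push_cast
        have : (k.factorial : ℝ) ≠ 0 := by positivity
        field_simp
      have hc : Continuous fun s => (n s * ∫ t in (0 : ℝ)..s, m t) *
          (volK m n s ^ k / k.factorial) := by fun_prop
      have hF := intervalIntegral.integral_eq_sub_of_hasDerivAt (a := 0) (b := x)
        (fun s _ => hd s) (hc.intervalIntegrable _ _)
      rw [hK0] at hF
      simp only [ne_eq, Nat.add_eq_zero_iff, one_ne_zero, and_false, not_false_eq_true, zero_pow,
        zero_div, sub_zero] at hF
      rw [← hF]
      refine intervalIntegral.integral_mono_on hx ((hn.mul hJ).intervalIntegrable _ _)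
        (hc.intervalIntegrable _ _) fun s hs => ?_
      rw [mul_assoc]
      refine mul_le_mul_of_nonneg_left ?_ (hn0 s)
      rw [← intervalIntegral.integral_mul_const]
      refine intervalIntegral.integral_mono_on hs.1 (hmI _ _) ((hm _ _).mul_const _)
        fun t ht => mul_le_mul_of_nonneg_left ?_ (hm0 t)
      refine (ih t ht.1).2.trans ?_
      have h1 := volK_mono hm hm0 hn hn0 (mem_Ici.2 le_rfl) (mem_Ici.2 ht.1) ht.1
      have h2 := volK_mono hm hm0 hn hn0 (mem_Ici.2 ht.1) (mem_Ici.2 hs.1) ht.2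
      rw [hK0] at h1
      gcongr

/-- Uniform bound for the terms of the series, for `x ∈ [0, p]` and `|l| ≤ L`. -/
lemma volF_term_bound {m n : ℝ → ℝ} (hm : ∀ x y, IntervalIntegrable m volume x y)
    (hm0 : ∀ x, 0 ≤ m x) (hn : Continuous n) (hn0 : ∀ x, 0 ≤ n x) {p L l x : ℝ}
    (hl : |l| ≤ L) (hx : x ∈ Icc 0 p) (k : ℕ) :
    ‖(-l) ^ k * volI m n k x‖ ≤ (L * volK m n p) ^ k / k.factorial := by
  have hb := volI_bound hm hm0 hn hn0 k x hx.1
  have h1 := volK_mono hm hm0 hn hn0 (mem_Ici.2 le_rfl) (mem_Ici.2 hx.1) hx.1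
  have h2 := volK_mono hm hm0 hn hn0 (mem_Ici.2 hx.1) (mem_Ici.2 (hx.1.trans hx.2)) hx.2
  rw [show volK m n 0 = 0 by simp [volK]] at h1
  rw [norm_mul, norm_pow, norm_neg, Real.norm_eq_abs, Real.norm_eq_abs, abs_of_nonneg hb.1,
    mul_pow, mul_div_assoc]
  have hL : 0 ≤ L := (abs_nonneg l).trans hl
  refine mul_le_mul (by gcongr) (hb.2.trans ?_) hb.1 (by positivity)
  gcongr

lemma volF_continuousOn {m n : ℝ → ℝ} (hm : ∀ x y, IntervalIntegrable m volume x y)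
    (hm0 : ∀ x, 0 ≤ m x) (hn : Continuous n) (hn0 : ∀ x, 0 ≤ n x) (l p : ℝ) :
    ContinuousOn (volF m n l) (Icc 0 p) :=
  continuousOn_tsum (fun k => (continuous_const.mul (volI_continuous hm hn k)).continuousOn)
    (Real.summable_pow_div_factorial (|l| * volK m n p))
    fun k _ hx => volF_term_bound hm hm0 hn hn0 le_rfl hx k

lemma volF_continuous_param {m n : ℝ → ℝ} (hm : ∀ x y, IntervalIntegrable m volume x y)
    (hm0 : ∀ x, 0 ≤ m x) (hn : Continuous n) (hn0 : ∀ x, 0 ≤ n x) {x : ℝ} (hx : 0 ≤ x) :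
    Continuous fun l => volF m n l x := by
  refine continuous_iff_continuousAt.2 fun l => ?_
  have h : ContinuousOn (fun l => volF m n l x) (Icc (-(|l| + 1)) (|l| + 1)) :=
    continuousOn_tsum (fun k => by fun_prop)
      (Real.summable_pow_div_factorial ((|l| + 1) * volK m n x))
      fun k l' hl' => volF_term_bound hm hm0 hn hn0 (abs_le.2 hl') ⟨hx, le_rfl⟩ k
  refine h.continuousAt (Icc_mem_nhds ?_ ?_)
  · linarith [neg_abs_le l]
  · linarith [le_abs_self l]

lemma volF_zero (m n : ℝ → ℝ) (x : ℝ) : volF m n 0 x = 1 := by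
  rw [volF, tsum_eq_single 0]
  · simp [volI]
  · intro k hk
    simp [hk]

/-- The Volterra equation satisfied by `f_l`, obtained by integrating the series term by term. -/
lemma volF_eq {m n : ℝ → ℝ} (hm : ∀ x y, IntervalIntegrable m volume x y)
    (hm0 : ∀ x, 0 ≤ m x) (hn : Continuous n) (hn0 : ∀ x, 0 ≤ n x) (l : ℝ) {x : ℝ} (hx : 0 ≤ x) :
    volF m n l x = 1 - l * ∫ s in (0 : ℝ)..x, n s * ∫ t in (0 : ℝ)..s, m t * volF m n l t := by
  have hS : ∀ t ∈ Icc 0 x, HasSum (fun k => (-l) ^ k * volI m n k t) (volF m n l t) := fun t ht =>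
    (Summable.of_norm_bounded (Real.summable_pow_div_factorial (|l| * volK m n x))
      fun k => volF_term_bound hm hm0 hn hn0 le_rfl ht k).hasSum
  have hI := volI_continuous hm hn
  have hmI : ∀ k x y, IntervalIntegrable (fun t => m t * volI m n k t) volume x y :=
    fun k x y => (hm x y).mul_continuousOn (hI k).continuousOn
  have hJ : ∀ k, Continuous fun s => ∫ t in (0 : ℝ)..s, m t * volI m n k t :=
    fun k => intervalIntegral.continuous_primitive (hmI k) 0
  set B : ℕ → ℝ := fun k => (|l| * volK m n x) ^ k / k.factorial with hB
  have hBs : Summable B := Real.summable_pow_div_factorial (|l| * volK m n x)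
  have hbd : ∀ k, ∀ t ∈ Icc 0 x, ‖(-l) ^ k * volI m n k t‖ ≤ B k :=
    fun k t ht => volF_term_bound hm hm0 hn hn0 le_rfl ht k
  have hM0 : ∀ s, 0 ≤ s → 0 ≤ ∫ t in (0 : ℝ)..s, m t :=
    fun s hs => intervalIntegral.integral_nonneg hs fun t _ => hm0 t
  have h1 : ∀ s ∈ Icc 0 x, HasSum (fun k => (-l) ^ k * ∫ t in (0 : ℝ)..s, m t * volI m n k t)
      (∫ t in (0 : ℝ)..s, m t * volF m n l t) := by
    intro s hs
    have := intervalIntegral.hasSum_integral_of_dominated_convergence (a := 0) (b := s)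
      (μ := volume) (F := fun k t => (-l) ^ k * (m t * volI m n k t))
      (f := fun t => m t * volF m n l t) (fun k t => m t * B k)
      (fun k => ((hmI k 0 s).const_mul _).def'.aestronglyMeasurable)
      (fun k => ae_of_all _ fun t ht => ?_) (ae_of_all _ fun t _ => hBs.mul_left _) ?_
      (ae_of_all _ fun t ht => ?_)
    · simpa only [intervalIntegral.integral_const_mul] using this
    · rw [uIoc_of_le hs.1] at ht
      rw [mul_left_comm, norm_mul, Real.norm_of_nonneg (hm0 t)]
      exact mul_le_mul_of_nonneg_left (hbd k t ⟨ht.1.le, ht.2.trans hs.2⟩) (hm0 t)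
    · simp only [tsum_mul_left]
      exact (hm 0 s).mul_const _
    · rw [uIoc_of_le hs.1] at ht
      simp only [mul_left_comm _ (m t)]
      exact (hS t ⟨ht.1.le, ht.2.trans hs.2⟩).mul_left _
  have h2 : HasSum (fun k => (-l) ^ k * volI m n (k + 1) x)
      (∫ s in (0 : ℝ)..x, n s * ∫ t in (0 : ℝ)..s, m t * volF m n l t) := by
    have := intervalIntegral.hasSum_integral_of_dominated_convergence (a := 0) (b := x)
      (μ := volume)
      (F := fun k s => (-l) ^ k * (n s * ∫ t in (0 : ℝ)..s, m t * volI m n k t))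
      (f := fun s => n s * ∫ t in (0 : ℝ)..s, m t * volF m n l t)
      (fun k s => (n s * ∫ t in (0 : ℝ)..s, m t) * B k)
      (fun k => (continuous_const.mul (hn.mul (hJ k))).aestronglyMeasurable)
      (fun k => ae_of_all _ fun s hs => ?_) (ae_of_all _ fun t _ => hBs.mul_left _) ?_
      (ae_of_all _ fun s hs => ?_)
    · simp only [intervalIntegral.integral_const_mul] at this
      exact this
    · rw [uIoc_of_le hx] at hs
      rw [mul_left_comm, norm_mul, Real.norm_of_nonneg (hn0 s), mul_assoc]
      refine mul_le_mul_of_nonneg_left ?_ (hn0 s)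
      rw [← intervalIntegral.integral_const_mul, ← intervalIntegral.integral_mul_const]
      refine intervalIntegral.norm_integral_le_of_norm_le hs.1.le (ae_of_all _ fun t ht => ?_)
        ((hm 0 s).mul_const _)
      rw [mul_left_comm, norm_mul, Real.norm_of_nonneg (hm0 t)]
      exact mul_le_mul_of_nonneg_left (hbd k t ⟨ht.1.le, ht.2.trans hs.2⟩) (hm0 t)
    · simp only [tsum_mul_left]
      have : Continuous fun s => n s * ∫ t in (0 : ℝ)..s, m t :=
        hn.mul (intervalIntegral.continuous_primitive hm 0)
      exact (this.intervalIntegrable _ _).mul_const _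
    · rw [uIoc_of_le hx] at hs
      simp only [mul_left_comm _ (n s)]
      exact (h1 s ⟨hs.1.le, hs.2⟩).mul_left _
  have h3 := (hS x ⟨hx, le_rfl⟩).summable.hasSum
  rw [volF, (hS x ⟨hx, le_rfl⟩).summable.tsum_eq_zero_add]
  have h4 := (h2.mul_left (-l)).tsum_eq
  simp only [pow_zero, one_mul]
  rw [show volI m n 0 x = 1 from rfl, sub_eq_add_neg, ← neg_mul, ← h4]
  congr 2
  ext k
  rw [pow_succ]
  ring

/-! ### The interval and the coefficients -/

lemma isOpen_ooI (D : ℝ≥0∞) : IsOpen (ooI D) :=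
  (isOpen_lt continuous_const continuous_id).inter
    (isOpen_lt ENNReal.continuous_ofReal continuous_const)

lemma ooI_subset_ccI (D : ℝ≥0∞) : ooI D ⊆ ccI D := fun _ hx => ⟨hx.1.le, hx.2.le⟩

lemma ooI_down {D : ℝ≥0∞} {x y : ℝ} (hx : x ∈ ooI D) (hy : 0 < y) (hyx : y ≤ x) : y ∈ ooI D :=
  ⟨hy, (ENNReal.ofReal_le_ofReal hyx).trans_lt hx.2⟩

lemma exists_gt_ooI {D : ℝ≥0∞} {p : ℝ} (hp : 0 ≤ p) (hpD : ENNReal.ofReal p < D) :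
    ∃ q ∈ ooI D, p < q := by
  obtain ⟨r, h1, h2⟩ := ENNReal.lt_iff_exists_nnreal_btwn.1 hpD
  have h3 : p < r := by
    rw [← ENNReal.ofReal_coe_nnreal] at h1
    exact (ENNReal.ofReal_lt_ofReal_iff_of_nonneg hp).1 h1
  exact ⟨r, ⟨hp.trans_lt h3, by rwa [ENNReal.ofReal_coe_nnreal]⟩, h3⟩

/-- Bounded parts of `(0, D)` lie in one of the intervals `[0, p]`, `p ≤ D`, on which the coefficients
are assumed integrable. -/
lemma ooI_inter_Iic (D : ℝ≥0∞) (R : ℝ) :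
    ∃ p, 0 ≤ p ∧ ENNReal.ofReal p ≤ D ∧ ooI D ∩ Iic R ⊆ Icc 0 p := by
  rcases eq_or_ne D ∞ with rfl | hD
  · exact ⟨max R 0, le_max_right _ _, le_top, fun x hx => ⟨hx.1.1.le, hx.2.trans (le_max_left _ _)⟩⟩
  · refine ⟨D.toReal, ENNReal.toReal_nonneg, by rw [ENNReal.ofReal_toReal hD], fun x hx => ?_⟩
    exact ⟨hx.1.1.le, (ENNReal.ofReal_le_iff_le_toReal hD).1 hx.1.2.le⟩

/-- The scale exponent `c` and the speed density `m`: `c` is a globally continuous version of `C`,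
and `m` is nonnegative, locally integrable on `ℝ`, and equal to `e^C / a` on `(0, D)`.  Being
defined on all of `ℝ`, they spare the distinction between finite and infinite `D`. -/
structure Coeffs (a b : ℝ → ℝ) (D : ℝ≥0∞) (c m : ℝ → ℝ) : Prop where
  c_cont : Continuous c
  c_zero : c 0 = 0
  c_deriv : ∀ x ∈ ooI D, HasDerivAt c (b x / a x) x
  c_eq : ∀ x ∈ ooI D, Cf a b x = c x
  m_eq : ∀ x ∈ ooI D, m x = Real.exp (c x) / a x
  m_cont : ContinuousOn m (ooI D)
  m_int : ∀ x y, IntervalIntegrable m volume x y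
  m_nonneg : ∀ x, 0 ≤ m x
  m_pos : ∀ x ∈ ooI D, 0 < m x

lemma intervalIntegrable_indicator {D : ℝ≥0∞} {g : ℝ → ℝ}
    (hg : ∀ p : ℝ, 0 ≤ p → ENNReal.ofReal p ≤ D → IntegrableOn g (Icc 0 p)) (x y : ℝ) :
    IntervalIntegrable ((ooI D).indicator g) volume x y := by
  obtain ⟨p, h0, hp, hsub⟩ := ooI_inter_Iic D (max x y)
  rw [intervalIntegrable_iff, IntegrableOn, integrable_indicator_iff (isOpen_ooI D).measurableSet,
    IntegrableOn, Measure.restrict_restrict (isOpen_ooI D).measurableSet]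
  exact (hg p h0 hp).mono_set fun z hz => hsub ⟨hz.1, hz.2.2⟩

lemma exists_coeffs {a b : ℝ → ℝ} {D : ℝ≥0∞} (hyp : Hyp a b D)
    (haC : ContinuousOn a (ccI D)) (hbC : ContinuousOn b (ccI D)) : ∃ c m, Coeffs a b D c m := by
  obtain ⟨-, -, hapos, hint⟩ := hyp
  have hSm := (isOpen_ooI D).measurableSet
  have hβ := intervalIntegrable_indicator fun p h0 hp => (hint p h0 hp).1
  have hμ := intervalIntegrable_indicator fun p h0 hp => (hint p h0 hp).2
  set β := (ooI D).indicator fun u => b u / a u with hβd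
  have hβc : ContinuousOn β (ooI D) :=
    ((hbC.mono (ooI_subset_ccI D)).div (haC.mono (ooI_subset_ccI D))
      fun x hx => (hapos x hx).ne').congr fun x hx => indicator_of_mem hx _
  have hcc : Continuous fun x => ∫ u in (0 : ℝ)..x, β u := intervalIntegral.continuous_primitive hβ 0
  have hce : ∀ x ∈ ooI D, Cf a b x = ∫ u in (0 : ℝ)..x, β u := by
    intro x hx
    rw [intervalIntegral.integral_of_le hx.1.le, integral_Ioc_eq_integral_Ioo, Cf]
    refine setIntegral_congr_fun measurableSet_Ioo fun u hu => ?_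
    rw [hβd]
    exact (indicator_of_mem (ooI_down hx hu.1 hu.2.le) (fun u => b u / a u)).symm
  have hme : ∀ x ∈ ooI D, (ooI D).indicator (fun u => Real.exp (Cf a b u) / a u) x =
      Real.exp (∫ u in (0 : ℝ)..x, β u) / a x := by
    intro x hx
    rw [indicator_of_mem hx, hce x hx]
  refine ⟨_, _, hcc, by simp, fun x hx => ?_, hce, hme, ?_, hμ, fun x => ?_, fun x hx => ?_⟩
  · have h1 := hβc.continuousAt ((isOpen_ooI D).mem_nhds hx)
    have := intervalIntegral.integral_hasDerivAt_right (hβ 0 x)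
      (hβc.stronglyMeasurableAtFilter (isOpen_ooI D) x hx) h1
    rwa [hβd, indicator_of_mem hx] at this
  · refine ContinuousOn.congr ?_ hme
    exact (Real.continuous_exp.comp hcc).continuousOn.div (haC.mono (ooI_subset_ccI D))
      fun x hx => (hapos x hx).ne'
  · exact indicator_apply_nonneg fun hx => div_nonneg (Real.exp_pos _).le (hapos x hx).le
  · rw [hme x hx]
    exact div_pos (Real.exp_pos _) (hapos x hx)

lemma muL2_eq {a b : ℝ → ℝ} {D : ℝ≥0∞} {c m : ℝ → ℝ} (H : Coeffs a b D c m) (f : ℝ → ℝ) :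
    muL2 a b D f = ∫⁻ x in ooI D, ENNReal.ofReal (m x * f x ^ 2) := by
  have hSm := (isOpen_ooI D).measurableSet
  have hme : ∀ x ∈ ooI D, Real.exp (Cf a b x) / a x = m x := fun x hx => by
    rw [H.c_eq x hx, H.m_eq x hx]
  rw [muL2, muM, lintegral_withDensity_eq_lintegral_mul_non_measurable₀]
  · refine setLIntegral_congr_fun hSm fun x hx => ?_
    simp only [Pi.mul_apply]
    rw [hme x hx, ENNReal.ofReal_mul (H.m_nonneg x)]
  · exact ((H.m_cont.congr hme).aemeasurable hSm).ennreal_ofReal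
  · exact ae_of_all _ fun x => ENNReal.ofReal_lt_top

lemma Dform_eq {a b : ℝ → ℝ} {D : ℝ≥0∞} {c m : ℝ → ℝ} (H : Coeffs a b D c m) (f : ℝ → ℝ) :
    Dform a b D f = ∫⁻ x in ooI D, ENNReal.ofReal (Real.exp (c x) * deriv f x ^ 2) :=
  setLIntegral_congr_fun (isOpen_ooI D).measurableSet fun x hx => by
    simp only [H.c_eq x hx]

/-- The Rayleigh bound for a test function that need not be normalised. -/
lemma rayleigh {a b : ℝ → ℝ} {D : ℝ≥0∞} {f : ℝ → ℝ}
    (hf : C1C D f) (hsupp : ∃ p : ℝ, 0 ≤ p ∧ ENNReal.ofReal p < D ∧ ∀ x, p < x → f x = 0)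
    (hfin : muL2 a b D f ≠ ∞) : lam0 a b D * muL2 a b D f ≤ Dform a b D f := by
  rcases eq_or_ne (muL2 a b D f) 0 with h0 | h0
  · simp [h0]
  set s := (muL2 a b D f).toReal with hs
  have hs0 : 0 < s := ENNReal.toReal_pos h0 hfin
  have hse : muL2 a b D f = ENNReal.ofReal s := (ENNReal.ofReal_toReal hfin).symm
  set r : ℝ := (Real.sqrt s)⁻¹ with hr
  have hr2 : r ^ 2 = s⁻¹ := by rw [hr, inv_pow, Real.sq_sqrt hs0.le]
  have hL : muL2 a b D (fun x => r * f x) = 1 := by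
    have : muL2 a b D (fun x => r * f x) = ENNReal.ofReal (s⁻¹) * muL2 a b D f := by
      rw [muL2, muL2, ← lintegral_const_mul' _ _ ENNReal.ofReal_ne_top]
      congr with x
      rw [mul_pow, hr2, ENNReal.ofReal_mul (by positivity)]
    rw [this, hse, ← ENNReal.ofReal_mul (by positivity), inv_mul_cancel₀ hs0.ne',
      ENNReal.ofReal_one]
  have hDf : Dform a b D (fun x => r * f x) = ENNReal.ofReal (s⁻¹) * Dform a b D f := by
    rw [Dform, Dform, ← lintegral_const_mul' _ _ ENNReal.ofReal_ne_top]
    congr with x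
    rw [deriv_const_mul_field, mul_pow, hr2, ← ENNReal.ofReal_mul (by positivity)]
    congr 1
    ring
  obtain ⟨p, hp0, hpD, hp⟩ := hsupp
  have hle : lam0 a b D ≤ Dform a b D (fun x => r * f x) := by
    refine sInf_le ⟨_, ⟨hf.1.const_mul r, fun x hx => (hf.2.1 x hx).const_mul r, ?_⟩,
      ⟨p, hp0, hpD, fun x hx => by simp [hp x hx]⟩, fun hD => ?_, hL, rfl⟩
    · refine (hf.2.2.const_mul r).congr fun x _ => ?_
      rw [deriv_const_mul_field]
    · rw [hp _ ((ENNReal.ofReal_lt_iff_lt_toReal hp0 hD).1 hpD), mul_zero]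
  calc lam0 a b D * muL2 a b D f
      ≤ Dform a b D (fun x => r * f x) * muL2 a b D f := by gcongr
    _ = Dform a b D f := by
      rw [hDf, hse, mul_right_comm, ← ENNReal.ofReal_mul (by positivity),
        inv_mul_cancel₀ hs0.ne', ENNReal.ofReal_one, one_mul]

/-! ### Truncated test functions -/

/-- The smooth truncation `t ↦ t² / (t + ε)`, a `C¹` substitute for the positive part: it vanishes
to second order at `0` and has slope in `[0, 1]` on `[0, ∞)`. -/
def trunc (ε t : ℝ) : ℝ := t ^ 2 / (t + ε)

lemma trunc_hasDerivAt {ε t : ℝ} (hε : 0 < ε) (ht : 0 ≤ t) :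
    HasDerivAt (trunc ε) (1 - (ε / (t + ε)) ^ 2) t := by
  have h : t + ε ≠ 0 := by positivity
  refine (((hasDerivAt_id t).fun_pow 2).fun_div ((hasDerivAt_id t).add_const ε) h).congr_deriv ?_
  simp only [id]
  field_simp
  ring

lemma setLIntegral_eq_of_vanish {S T : Set ℝ} (hS : MeasurableSet S) (hT : MeasurableSet T)
    (hTS : T ⊆ S) {f g : ℝ → ℝ≥0∞} (h0 : ∀ x ∈ S, x ∉ T → f x = 0) (h1 : ∀ x ∈ T, f x = g x) :
    ∫⁻ x in S, f x = ∫⁻ x in T, g x := by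
  rw [← lintegral_indicator hS, ← lintegral_indicator hT]
  congr with x
  by_cases hx : x ∈ T
  · rw [indicator_of_mem hx, indicator_of_mem (hTS hx), h1 x hx]
  · rw [indicator_of_notMem hx]
    by_cases hxS : x ∈ S
    · rw [indicator_of_mem hxS, h0 x hxS hx]
    · rw [indicator_of_notMem hxS]

/-- Rayleigh bound for a function which is positive on `[0, x₁)`, vanishes at `x₁ < D` and is
continued by `0`.  The kink at `x₁` is removed by composing with `trunc ε` and letting `ε → 0`. -/
lemma cutoff {a b : ℝ → ℝ} {D : ℝ≥0∞} {c m : ℝ → ℝ} (H : Coeffs a b D c m) {f g : ℝ → ℝ} {x₁ l : ℝ}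
    (hx₁ : x₁ ∈ ooI D) (hfc : ContinuousOn f (Icc 0 x₁)) (hgc : ContinuousOn g (Icc 0 x₁))
    (hfd : ∀ x ∈ Ioc 0 x₁, HasDerivAt f (g x) x) (hf0 : ∀ x ∈ Icc 0 x₁, 0 ≤ f x)
    (hf1 : f x₁ = 0) (hl0 : 0 ≤ l) (hl : ENNReal.ofReal l ≤ lam0 a b D) :
    l * (∫ x in (0 : ℝ)..x₁, m x * f x ^ 2) ≤ ∫ x in (0 : ℝ)..x₁, Real.exp (c x) * g x ^ 2 := by
  have hSm := (isOpen_ooI D).measurableSet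
  have hx0 : 0 < x₁ := hx₁.1
  have hsub : Ioc 0 x₁ ⊆ ooI D := fun x hx => ooI_down hx₁ hx.1 hx.2
  have huIcc : uIcc 0 x₁ = Icc 0 x₁ := uIcc_of_le hx0.le
  have hm := H.m_int 0 x₁
  have hE : ContinuousOn (fun x => Real.exp (c x) * g x ^ 2) (Icc 0 x₁) :=
    (Real.continuous_exp.comp H.c_cont).continuousOn.mul (hgc.pow 2)
  -- the bound for a fixed truncation
  have key : ∀ ε > 0, l * ((∫ x in (0 : ℝ)..x₁, m x * f x ^ 2) -
      ε * ∫ x in (0 : ℝ)..x₁, m x * (2 * f x)) ≤ ∫ x in (0 : ℝ)..x₁, Real.exp (c x) * g x ^ 2 := by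
    intro ε hε
    have hpos : ∀ x ∈ Icc 0 x₁, f x + ε ≠ 0 := fun x hx => by
      have := hf0 x hx
      positivity
    have hGc : ContinuousOn (fun x => trunc ε (f x)) (Icc 0 x₁) :=
      (hfc.pow 2).div (hfc.add continuousOn_const) hpos
    set d : ℝ → ℝ := fun x => (1 - (ε / (f x + ε)) ^ 2) * g x with hd
    have hdc : ContinuousOn d (Icc 0 x₁) :=
      (continuousOn_const.sub ((continuousOn_const.div (hfc.add continuousOn_const) hpos).pow 2)).mul
        hgc
    have hd1 : d x₁ = 0 := by simp [hd, hf1, hε.ne']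
    set φ : ℝ → ℝ := fun x => if x ≤ x₁ then trunc ε (f x) else 0 with hφ
    have hG1 : trunc ε (f x₁) = 0 := by simp [trunc, hf1]
    have hGd : ∀ x ∈ Ioc 0 x₁, HasDerivAt (fun x => trunc ε (f x)) (d x) x := fun x hx =>
      (trunc_hasDerivAt hε (hf0 x ⟨hx.1.le, hx.2⟩)).comp x (hfd x hx)
    have hφd : ∀ x ∈ ooI D, HasDerivAt φ (if x ≤ x₁ then d x else 0) x := by
      intro x hx
      rcases lt_trichotomy x x₁ with h | rfl | h
      · rw [if_pos h.le]
        refine (hGd x ⟨hx.1, h.le⟩).congr_of_eventuallyEq ?_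
        filter_upwards [Iio_mem_nhds h] with y hy
        exact if_pos (le_of_lt hy)
      · rw [if_pos le_rfl]
        have h1 : HasDerivWithinAt φ (d x) (Iic x) x :=
          (hGd x ⟨hx.1, le_rfl⟩).hasDerivWithinAt.congr (fun y hy => if_pos hy) (if_pos le_rfl)
        have h2 : HasDerivWithinAt φ (d x) (Ici x) x := by
          rw [hd1]
          refine (hasDerivWithinAt_const x _ (0 : ℝ)).congr (fun y hy => ?_) ?_
          · rcases eq_or_lt_of_le (mem_Ici.1 hy) with rfl | hy
            · simp [hφ, hG1]
            · exact if_neg (not_le.2 hy)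
          · simp [hφ, hG1]
        have := h1.union h2
        rwa [Iic_union_Ici, hasDerivWithinAt_univ] at this
      · rw [if_neg (not_le.2 h)]
        refine (hasDerivAt_const x (0 : ℝ)).congr_of_eventuallyEq ?_
        filter_upwards [Ioi_mem_nhds h] with y hy
        exact if_neg (not_le.2 hy)
    have hfr : ∀ x ∈ frontier {y : ℝ | y ≤ x₁}, x = x₁ := fun x hx => by
      have : x ∈ frontier (Iic x₁) := hx
      rwa [frontier_Iic] at this
    have hcl : closure {y : ℝ | y ≤ x₁} = Iic x₁ := isClosed_Iic.closure_eq
    have hC1 : C1C D φ := by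
      refine ⟨?_, fun x hx => (hφd x hx).differentiableAt, ?_⟩
      · refine ContinuousOn.if (fun x hx => ?_) ?_ continuousOn_const
        · rw [hfr x hx.2, hG1]
        · rw [hcl]
          exact hGc.mono fun x hx => ⟨hx.1.1, hx.2⟩
      · have : ContinuousOn (fun x => if x ≤ x₁ then d x else 0) (ooI D) := by
          refine ContinuousOn.if (fun x hx => ?_) ?_ continuousOn_const
          · rw [hfr x hx.2, hd1]
          · rw [hcl]
            exact hdc.mono fun x hx => ⟨hx.1.1.le, hx.2⟩
        exact this.congr fun x hx => (hφd x hx).deriv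
    have hAi : IntervalIntegrable (fun x => m x * trunc ε (f x) ^ 2) volume 0 x₁ :=
      hm.mul_continuousOn (by rw [huIcc]; exact hGc.pow 2)
    have hmu : muL2 a b D φ = ENNReal.ofReal (∫ x in (0 : ℝ)..x₁, m x * trunc ε (f x) ^ 2) := by
      rw [muL2_eq H, intervalIntegral.integral_of_le hx0.le, ofReal_integral_eq_lintegral_ofReal
        ((intervalIntegrable_iff_integrableOn_Ioc_of_le hx0.le).1 hAi)
        (ae_of_all _ fun x => mul_nonneg (H.m_nonneg x) (sq_nonneg _))]
      refine setLIntegral_eq_of_vanish hSm measurableSet_Ioc hsub (fun x hx hx' => ?_)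
        fun x hx => ?_
      · have : φ x = 0 := if_neg fun h => hx' ⟨hx.1, h⟩
        simp [this]
      · have : φ x = trunc ε (f x) := if_pos hx.2
        rw [this]
    have hDf : Dform a b D φ ≤ ENNReal.ofReal (∫ x in (0 : ℝ)..x₁, Real.exp (c x) * g x ^ 2) := by
      rw [Dform_eq H, intervalIntegral.integral_of_le hx0.le, ofReal_integral_eq_lintegral_ofReal
        ((hE.integrableOn_Icc).mono_set Ioc_subset_Icc_self)
        (ae_of_all _ fun x => mul_nonneg (Real.exp_pos _).le (sq_nonneg _)),
        setLIntegral_eq_of_vanish hSm measurableSet_Ioc hsub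
          (g := fun x => ENNReal.ofReal (Real.exp (c x) * d x ^ 2)) (fun x hx hx' => ?_)
          fun x hx => ?_]
      · refine setLIntegral_mono' measurableSet_Ioc fun x hx => ENNReal.ofReal_le_ofReal ?_
        refine mul_le_mul_of_nonneg_left ?_ (Real.exp_pos _).le
        have h0 := hf0 x ⟨hx.1.le, hx.2⟩
        have h1 : 0 ≤ ε / (f x + ε) := by positivity
        have h2 : ε / (f x + ε) ≤ 1 := (div_le_one (by positivity)).2 (by linarith)
        have h3 : (ε / (f x + ε)) ^ 2 ≤ 1 := pow_le_one₀ h1 h2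
        have h4 : (1 - (ε / (f x + ε)) ^ 2) ^ 2 ≤ 1 :=
          pow_le_one₀ (by linarith) (by linarith [sq_nonneg (ε / (f x + ε))])
        rw [hd, mul_pow]
        exact mul_le_of_le_one_left (sq_nonneg _) h4
      · rw [(hφd x hx).deriv, if_neg fun h => hx' ⟨hx.1, h⟩]
        simp
      · rw [(hφd x (hsub hx)).deriv, if_pos hx.2]
    have hR := rayleigh hC1 ⟨x₁, hx0.le, hx₁.2, fun x hx => if_neg (not_le.2 hx)⟩
      (by rw [hmu]; exact ENNReal.ofReal_ne_top)
    have hR2 : ENNReal.ofReal (l * ∫ x in (0 : ℝ)..x₁, m x * trunc ε (f x) ^ 2) ≤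
        ENNReal.ofReal (∫ x in (0 : ℝ)..x₁, Real.exp (c x) * g x ^ 2) := by
      rw [ENNReal.ofReal_mul hl0, ← hmu]
      exact (mul_le_mul_left hl _).trans (hR.trans hDf)
    have hEnn : 0 ≤ ∫ x in (0 : ℝ)..x₁, Real.exp (c x) * g x ^ 2 :=
      intervalIntegral.integral_nonneg hx0.le fun x _ =>
        mul_nonneg (Real.exp_pos _).le (sq_nonneg _)
    refine le_trans (mul_le_mul_of_nonneg_left ?_ hl0) ((ENNReal.ofReal_le_ofReal_iff hEnn).1 hR2)
    have hi1 : IntervalIntegrable (fun x => m x * f x ^ 2) volume 0 x₁ :=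
      hm.mul_continuousOn (by rw [huIcc]; exact hfc.pow 2)
    have hi2 : IntervalIntegrable (fun x => m x * (2 * f x)) volume 0 x₁ :=
      hm.mul_continuousOn (by rw [huIcc]; exact continuousOn_const.mul hfc)
    rw [← intervalIntegral.integral_const_mul, ← intervalIntegral.integral_sub hi1
      (hi2.const_mul _)]
    refine intervalIntegral.integral_mono_on hx0.le (hi1.sub (hi2.const_mul _)) hAi
      fun x hx => ?_
    have h0 := hf0 x hx
    have h1 : trunc ε (f x) = f x - ε * (f x / (f x + ε)) := by
      have := hpos x hx
      rw [trunc]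
      field_simp
      ring
    have h2 : 0 ≤ f x / (f x + ε) := by positivity
    have h3 : f x / (f x + ε) ≤ 1 := (div_le_one (by positivity)).2 (by linarith)
    have h4 : f x ^ 2 - ε * (2 * f x) ≤ trunc ε (f x) ^ 2 := by
      rw [h1]
      nlinarith [mul_nonneg (mul_nonneg hε.le h0) (sub_nonneg.2 h3),
        sq_nonneg (ε * (f x / (f x + ε)))]
    calc m x * f x ^ 2 - ε * (m x * (2 * f x)) = m x * (f x ^ 2 - ε * (2 * f x)) := by ring
      _ ≤ _ := mul_le_mul_of_nonneg_left h4 (H.m_nonneg x)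
  set A := ∫ x in (0 : ℝ)..x₁, m x * f x ^ 2
  set B := ∫ x in (0 : ℝ)..x₁, m x * (2 * f x)
  have hlim : Tendsto (fun ε : ℝ => l * (A - ε * B)) (𝓝[>] 0) (𝓝 (l * (A - 0 * B))) := by
    refine Tendsto.mono_left ?_ nhdsWithin_le_nhds
    exact Continuous.tendsto (by fun_prop) 0
  rw [zero_mul, sub_zero] at hlim
  exact le_of_tendsto hlim (eventually_mem_nhdsWithin.mono key)

/-- Finiteness of `λ₀`: the cut-off linear function `x₁ - x` has finite energy. -/
lemma lam0_ne_top {a b : ℝ → ℝ} {D : ℝ≥0∞} {c m : ℝ → ℝ} (H : Coeffs a b D c m) (hD : 0 < D) :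
    lam0 a b D ≠ ∞ := by
  intro htop
  obtain ⟨x₁, hx₁, -⟩ := exists_gt_ooI le_rfl (by simpa using hD)
  have hx0 : 0 < x₁ := hx₁.1
  set A := ∫ x in (0 : ℝ)..x₁, m x * (x₁ - x) ^ 2
  set E := ∫ x in (0 : ℝ)..x₁, Real.exp (c x) * (-1 : ℝ) ^ 2
  have hA : 0 < A := by
    refine intervalIntegral.intervalIntegral_pos_of_pos_on
      ((H.m_int 0 x₁).mul_continuousOn (by fun_prop)) (fun x hx => ?_) hx0
    have h1 := H.m_pos x (ooI_down hx₁ hx.1 hx.2.le)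
    have h2 : 0 < x₁ - x := sub_pos.2 hx.2
    positivity
  have hE : 0 ≤ E := intervalIntegral.integral_nonneg hx0.le fun x _ =>
    mul_nonneg (Real.exp_pos _).le (sq_nonneg _)
  have : (E / A + 1) * A ≤ E := cutoff H (f := fun x => x₁ - x) (g := fun _ => -1) (l := E / A + 1) hx₁ (by fun_prop)
    (by fun_prop) (fun x _ => (hasDerivAt_id x).const_sub x₁) (fun x hx => sub_nonneg.2 hx.2)
    (sub_self _) (by positivity) (by rw [htop]; exact le_top)
  have h2 : (E / A + 1) * A = E + A := by field_simp
  linarith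

/-! ### Positivity of the eigenfunction -/

/-- The flux `∫_0^x m f_l`; thus `e^C f_l' = -l ∫_0^x m f_l`. -/
def flux (c m : ℝ → ℝ) (l x : ℝ) : ℝ :=
  ∫ t in (0 : ℝ)..x, m t * volF m (fun s => Real.exp (-c s)) l t

/-- The solution of `(e^C f')' = -l (e^C/a) f`, `f(0) = 1`, `(e^C f')(0) = 0`. -/
def eigF (c m : ℝ → ℝ) (l x : ℝ) : ℝ := volF m (fun s => Real.exp (-c s)) l x

section

variable {a b : ℝ → ℝ} {D : ℝ≥0∞} {c m : ℝ → ℝ}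

lemma eigF_cont (H : Coeffs a b D c m) (l p : ℝ) : ContinuousOn (eigF c m l) (Icc 0 p) :=
  volF_continuousOn H.m_int H.m_nonneg (Real.continuous_exp.comp H.c_cont.neg)
    (fun _ => (Real.exp_pos _).le) l p

lemma eigF_eq (H : Coeffs a b D c m) (l : ℝ) {x : ℝ} (hx : 0 ≤ x) :
    eigF c m l x = 1 - l * ∫ s in (0 : ℝ)..x, Real.exp (-c s) * flux c m l s :=
  volF_eq H.m_int H.m_nonneg (Real.continuous_exp.comp H.c_cont.neg)
    (fun _ => (Real.exp_pos _).le) l hx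

lemma eigF_zero (H : Coeffs a b D c m) (l : ℝ) : eigF c m l 0 = 1 := by
  rw [eigF_eq H l le_rfl]
  simp

lemma m_eigF_int (H : Coeffs a b D c m) (l : ℝ) {p : ℝ} (hp : 0 ≤ p) :
    IntervalIntegrable (fun t => m t * eigF c m l t) volume 0 p :=
  (H.m_int 0 p).mul_continuousOn (by rw [uIcc_of_le hp]; exact eigF_cont H l p)

lemma flux_cont (H : Coeffs a b D c m) (l p : ℝ) : ContinuousOn (flux c m l) (Icc 0 p) := by
  rcases le_or_gt 0 p with hp | hp
  · have := intervalIntegral.continuousOn_primitive_interval (a := 0) (b := p) (μ := volume)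
      (f := fun t => m t * eigF c m l t) (by
        rw [uIcc_of_le hp]
        exact (intervalIntegrable_iff_integrableOn_Icc_of_le hp).1 (m_eigF_int H l hp))
    rwa [uIcc_of_le hp] at this
  · rw [Icc_eq_empty (not_le.2 hp)]
    exact continuousOn_empty _

lemma continuousAt_of_Icc {f : ℝ → ℝ} (hf : ∀ p, ContinuousOn f (Icc 0 p)) {x : ℝ} (hx : 0 < x) :
    ContinuousAt f x := (hf (x + 1)).continuousAt (Icc_mem_nhds hx (by linarith))

lemma eigF_hasDerivAt (H : Coeffs a b D c m) (l : ℝ) {x : ℝ} (hx : 0 < x) :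
    HasDerivAt (eigF c m l) (-l * (Real.exp (-c x) * flux c m l x)) x := by
  have hc : ∀ p, ContinuousOn (fun s => Real.exp (-c s) * flux c m l s) (Icc 0 p) := fun p =>
    (Real.continuous_exp.comp H.c_cont.neg).continuousOn.mul (flux_cont H l p)
  have h1 : HasDerivAt (fun u => ∫ s in (0 : ℝ)..u, Real.exp (-c s) * flux c m l s)
      (Real.exp (-c x) * flux c m l x) x := by
    refine intervalIntegral.integral_hasDerivAt_right
      (ContinuousOn.intervalIntegrable (by rw [uIcc_of_le hx.le]; exact hc x))
      ?_ (continuousAt_of_Icc hc hx)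
    exact ((hc (x + 1)).mono Ioo_subset_Icc_self).stronglyMeasurableAtFilter isOpen_Ioo x
      ⟨hx, by linarith⟩
  refine (((h1.const_mul l).const_sub 1).congr_of_eventuallyEq ?_).congr_deriv (by ring)
  filter_upwards [Ioi_mem_nhds hx] with y hy
  exact eigF_eq H l (le_of_lt hy)

lemma flux_hasDerivAt (H : Coeffs a b D c m) (l : ℝ) {x : ℝ} (hx : x ∈ ooI D) :
    HasDerivAt (flux c m l) (m x * eigF c m l x) x := by
  have hc : ContinuousOn (fun t => m t * eigF c m l t) (ooI D) := fun y hy =>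
    ((H.m_cont.continuousAt ((isOpen_ooI D).mem_nhds hy)).mul
      (continuousAt_of_Icc (eigF_cont H l) hy.1)).continuousWithinAt
  exact intervalIntegral.integral_hasDerivAt_right (m_eigF_int H l hx.1.le)
    (hc.stronglyMeasurableAtFilter (isOpen_ooI D) x hx)
    (hc.continuousAt ((isOpen_ooI D).mem_nhds hx))

/-- Below `λ₀` the solution has no sign change: otherwise its restriction to the interval up to the
first zero would have Rayleigh quotient `l < λ₀`. -/
lemma eigF_nonneg (H : Coeffs a b D c m) {l : ℝ} (hl0 : 0 ≤ l)
    (hl : ENNReal.ofReal l < lam0 a b D) {x₀ : ℝ} (hx₀ : x₀ ∈ ooI D) : 0 ≤ eigF c m l x₀ := by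
  by_contra! hneg
  set f := eigF c m l with hf
  have hfc := eigF_cont H l
  -- the first zero of `f`
  have hZ : (Icc 0 x₀ ∩ f ⁻¹' {0}).Nonempty := by
    obtain ⟨z, hz, hz0⟩ := intermediate_value_Icc' hx₀.1.le (hfc x₀)
      (show (0 : ℝ) ∈ Icc (f x₀) (f 0) from ⟨hneg.le, by rw [hf, eigF_zero H]; exact zero_le_one⟩)
    exact ⟨z, hz, hz0⟩
  have hZc : IsCompact (Icc 0 x₀ ∩ f ⁻¹' {0}) :=
    isCompact_Icc.of_isClosed_subset
      ((hfc x₀).preimage_isClosed_of_isClosed isClosed_Icc isClosed_singleton) inter_subset_left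
  obtain ⟨x₁, ⟨hx₁, hfx₁⟩, hmin⟩ := hZc.exists_isLeast hZ
  have hfx₁ : f x₁ = 0 := hfx₁
  have hx₁0 : 0 < x₁ := by
    rcases eq_or_lt_of_le hx₁.1 with h | h
    · rw [← h, hf, eigF_zero H] at hfx₁
      exact absurd hfx₁ one_ne_zero
    · exact h
  have hx₁S : x₁ ∈ ooI D := ooI_down hx₀ hx₁0 hx₁.2
  have hfpos : ∀ x ∈ Ico 0 x₁, 0 < f x := by
    intro x hx
    by_contra! hle
    obtain ⟨z, hz, hz0⟩ := intermediate_value_Icc' hx.1 (hfc x)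
      (show (0 : ℝ) ∈ Icc (f x) (f 0) from ⟨hle, by rw [hf, eigF_zero H]; exact zero_le_one⟩)
    have := hmin ⟨⟨hz.1, hz.2.trans (hx.2.le.trans hx₁.2)⟩, hz0⟩
    linarith [hz.2, hx.2]
  have hfnn : ∀ x ∈ Icc 0 x₁, 0 ≤ f x := by
    intro x hx
    rcases eq_or_lt_of_le hx.2 with rfl | h
    · exact hfx₁.ge
    · exact (hfpos x ⟨hx.1, h⟩).le
  set g : ℝ → ℝ := fun x => -l * (Real.exp (-c x) * flux c m l x) with hg
  have hgc : ContinuousOn g (Icc 0 x₁) := continuousOn_const.mul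
    ((Real.continuous_exp.comp H.c_cont.neg).continuousOn.mul (flux_cont H l x₁))
  have huIcc : uIcc 0 x₁ = Icc 0 x₁ := uIcc_of_le hx₁0.le
  set A := ∫ x in (0 : ℝ)..x₁, m x * f x ^ 2 with hA
  have hAi : IntervalIntegrable (fun x => m x * f x ^ 2) volume 0 x₁ :=
    (H.m_int 0 x₁).mul_continuousOn (by rw [huIcc]; exact (hfc x₁).pow 2)
  have hApos : 0 < A := intervalIntegral.intervalIntegral_pos_of_pos_on hAi (fun x hx =>
    mul_pos (H.m_pos x (ooI_down hx₁S hx.1 hx.2.le)) (pow_pos (hfpos x ⟨hx.1.le, hx.2⟩) 2)) hx₁0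
  have hEi : IntervalIntegrable (fun x => Real.exp (c x) * g x ^ 2) volume 0 x₁ :=
    ContinuousOn.intervalIntegrable (by
      rw [huIcc]
      exact (Real.continuous_exp.comp H.c_cont).continuousOn.mul (hgc.pow 2))
  -- Green's identity; the boundary terms vanish because `f x₁ = 0` and `flux 0 = 0`
  have hE : ∫ x in (0 : ℝ)..x₁, Real.exp (c x) * g x ^ 2 = l * A := by
    have hd : ∀ x ∈ Ioo 0 x₁, HasDerivAt (fun x => f x * (-l * flux c m l x))
        (Real.exp (c x) * g x ^ 2 - l * (m x * f x ^ 2)) x := by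
      intro x hx
      have h1 := (eigF_hasDerivAt H l hx.1).mul
        ((flux_hasDerivAt H l (ooI_down hx₁S hx.1 hx.2.le)).const_mul (-l))
      refine h1.congr_deriv ?_
      have he : Real.exp (c x) * Real.exp (-c x) = 1 := by rw [← Real.exp_add]; simp
      rw [hg, ← hf]
      linear_combination (-l ^ 2 * flux c m l x ^ 2 * Real.exp (-c x)) * he
    have := intervalIntegral.integral_eq_sub_of_hasDerivAt_of_le
      (f := fun x => f x * (-l * flux c m l x)) hx₁0.le ((hfc x₁).mul (continuousOn_const.mul (flux_cont H l x₁))) hd (hEi.sub (hAi.const_mul l))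
    rw [intervalIntegral.integral_sub hEi (hAi.const_mul l),
      intervalIntegral.integral_const_mul] at this
    have h0 : flux c m l 0 = 0 := intervalIntegral.integral_same
    rw [hfx₁, h0] at this
    linarith
  -- compare with some `l' ∈ (l, λ₀]`
  obtain ⟨r, h1, h2⟩ := ENNReal.lt_iff_exists_nnreal_btwn.1 hl
  have hlr : l < r := by
    rw [← ENNReal.ofReal_coe_nnreal] at h1
    exact (ENNReal.ofReal_lt_ofReal_iff_of_nonneg hl0).1 h1
  have hcut := cutoff H hx₁S (hfc x₁) hgc (fun x hx => eigF_hasDerivAt H l hx.1) hfnn hfx₁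
    r.2 (by rw [← ENNReal.ofReal_coe_nnreal] at h2; exact h2.le)
  rw [hE] at hcut
  exact absurd (le_of_mul_le_mul_right hcut hApos) (not_le.2 hlr)

lemma flux_pos (H : Coeffs a b D c m) {l x : ℝ} (hx : x ∈ ooI D)
    (hnn : ∀ y ∈ ooI D, 0 ≤ eigF c m l y) : 0 < flux c m l x := by
  have hx0 : 0 < x := hx.1
  -- `f` is positive near `0` because `f 0 = 1`
  have hnear : ∃ δ, 0 < δ ∧ δ ≤ x ∧ ∀ y ∈ Icc 0 δ, 0 < eigF c m l y := by
    have h0 : ContinuousWithinAt (eigF c m l) (Icc 0 x) 0 := eigF_cont H l x 0 ⟨le_rfl, hx0.le⟩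
    have h1 : ∀ᶠ y in 𝓝[Icc 0 x] 0, 0 < eigF c m l y :=
      h0.eventually (lt_mem_nhds (by rw [eigF_zero H]; exact one_pos))
    obtain ⟨ε, hε, hb⟩ := Metric.mem_nhdsWithin_iff.1 h1
    refine ⟨min x (ε / 2), lt_min hx0 (by positivity), min_le_left _ _, fun y hy => ?_⟩
    refine hb ⟨?_, hy.1, hy.2.trans (min_le_left _ _)⟩
    rw [Metric.mem_ball, Real.dist_eq, sub_zero, abs_of_nonneg hy.1]
    linarith [hy.2.trans (min_le_right x (ε / 2))]
  obtain ⟨δ, hδ, hδx, hpos⟩ := hnear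
  have hi := m_eigF_int H l hx0.le
  have hi1 := m_eigF_int H l hδ.le
  have h1 : 0 < ∫ t in (0 : ℝ)..δ, m t * eigF c m l t :=
    intervalIntegral.intervalIntegral_pos_of_pos_on hi1 (fun t ht =>
      mul_pos (H.m_pos t (ooI_down hx ht.1 (ht.2.le.trans hδx))) (hpos t ⟨ht.1.le, ht.2.le⟩)) hδ
  have h2 : 0 ≤ ∫ t in δ..x, m t * eigF c m l t :=
    intervalIntegral.integral_nonneg hδx fun t ht =>
      mul_nonneg (H.m_nonneg t) (hnn t (ooI_down hx (hδ.trans_le ht.1) ht.2))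
  have h3 := intervalIntegral.integral_add_adjacent_intervals hi1 (hi1.symm.trans hi)
  have h4 : flux c m l x = ∫ t in (0 : ℝ)..x, m t * eigF c m l t := rfl
  rw [h4, ← h3]
  linarith

/-- At `l = λ₀` the solution is strictly positive: it is nonnegative by continuity in `l`, and
strictly decreasing when `λ₀ > 0`. -/
lemma eigF_pos (H : Coeffs a b D c m) {l : ℝ} (hl0 : 0 ≤ l)
    (hl : ENNReal.ofReal l = lam0 a b D) : ∀ x ∈ ooI D, 0 < eigF c m l x := by
  rcases eq_or_lt_of_le hl0 with rfl | hlpos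
  · intro x _
    rw [eigF, volF_zero]
    exact one_pos
  have hnn : ∀ x ∈ ooI D, 0 ≤ eigF c m l x := by
    intro x hx
    have hc := volF_continuous_param H.m_int H.m_nonneg (Real.continuous_exp.comp H.c_cont.neg)
      (fun _ => (Real.exp_pos _).le) hx.1.le
    have ht : Tendsto (fun k => eigF c m k x) (𝓝[<] l) (𝓝 (eigF c m l x)) :=
      (hc.tendsto l).mono_left nhdsWithin_le_nhds
    refine ge_of_tendsto ht ?_
    filter_upwards [Ioo_mem_nhdsLT hlpos] with k hk
    exact eigF_nonneg H hk.1.le (hl ▸ (ENNReal.ofReal_lt_ofReal_iff hlpos).2 hk.2) hx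
  intro x hx
  obtain ⟨y, hy, hxy⟩ := exists_gt_ooI hx.1.le hx.2
  have hanti : StrictAntiOn (eigF c m l) (Icc x y) := by
    refine strictAntiOn_of_deriv_neg (convex_Icc x y)
      ((eigF_cont H l y).mono (Icc_subset_Icc_left hx.1.le)) fun z hz => ?_
    rw [interior_Icc] at hz
    have hz0 : 0 < z := hx.1.trans hz.1
    rw [(eigF_hasDerivAt H l hz0).deriv]
    have := mul_pos hlpos (mul_pos (Real.exp_pos (-c z))
      (flux_pos H (ooI_down hy hz0 hz.2.le) hnn))
    linarith
  exact (hnn y hy).trans_lt (hanti ⟨le_rfl, hxy.le⟩ ⟨hxy.le, le_rfl⟩ hxy)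

end

/-! ### The two bounds for `R̄` -/

section

variable {a b : ℝ → ℝ} {D : ℝ≥0∞} {c m : ℝ → ℝ}

/-- The function `h = -e^{-C} ∫_0^x m f_l` lies in `H*` and `R̄(h)` is constant equal to `l`, because
`a h' + b h = -f_l` and `f_l' = l h`.  For `l > 0` it is `f_l' / l`; dividing by `l` keeps the case
`l = 0` available. -/
lemma extremal (H : Coeffs a b D c m)
    (haC1 : ∀ x ∈ ooI D, DifferentiableAt ℝ a x) (haC1' : ContinuousOn (deriv a) (ooI D))
    (hbC1 : ∀ x ∈ ooI D, DifferentiableAt ℝ b x) (hbC1' : ContinuousOn (deriv b) (ooI D))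
    (hapos : ∀ x ∈ ooI D, 0 < a x) {l : ℝ} (hpos : ∀ x ∈ ooI D, 0 < eigF c m l x) :
    ∃ h ∈ Hstar a b D, ∀ x ∈ ooI D, Rbar a b h x = l := by
  set f := eigF c m l with hf
  set h : ℝ → ℝ := fun x => -(Real.exp (-c x) * flux c m l x) with hh
  have hSo := isOpen_ooI D
  have hfd : ∀ x ∈ ooI D, HasDerivAt f (l * h x) x := fun x hx =>
    (eigF_hasDerivAt H l hx.1).congr_deriv (by simp only [hh]; ring)
  have hhd : ∀ x ∈ ooI D, HasDerivAt h (-(b x * h x + f x) / a x) x := by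
    intro x hx
    refine (((H.c_deriv x hx).neg.exp.mul (flux_hasDerivAt H l hx)).neg).congr_deriv ?_
    have ha := (hapos x hx).ne'
    have he : Real.exp (-c x) * Real.exp (c x) = 1 := by rw [← Real.exp_add]; simp
    rw [H.m_eq x hx, ← hf]
    simp only [hh]
    field_simp
    linear_combination (-f x) * he
  have hneg : ∀ x ∈ ooI D, h x < 0 := fun x hx => neg_neg_of_pos
    (mul_pos (Real.exp_pos _) (flux_pos H hx fun y hy => (hpos y hy).le))
  set d2 : ℝ → ℝ := fun x =>
    (-(deriv b x * h x + b x * (-(b x * h x + f x) / a x) + l * h x) * a x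
      - -(b x * h x + f x) * deriv a x) / a x ^ 2 with hd2
  have hhd2 : ∀ x ∈ ooI D, HasDerivAt (deriv h) (d2 x) x := by
    intro x hx
    have h1 := ((((hbC1 x hx).hasDerivAt.fun_mul (hhd x hx)).fun_add (hfd x hx)).fun_neg).fun_div
      (haC1 x hx).hasDerivAt (hapos x hx).ne'
    refine h1.congr_of_eventuallyEq ?_
    filter_upwards [hSo.mem_nhds hx] with y hy
    exact (hhd y hy).deriv
  have hhcS : ContinuousOn h (ooI D) := fun x hx => (hhd x hx).continuousAt.continuousWithinAt
  have hfcS : ContinuousOn f (ooI D) := fun x hx => (hfd x hx).continuousAt.continuousWithinAt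
  have hacS : ContinuousOn a (ooI D) := fun x hx => (haC1 x hx).continuousAt.continuousWithinAt
  have hbcS : ContinuousOn b (ooI D) := fun x hx => (hbC1 x hx).continuousAt.continuousWithinAt
  have hane : ∀ x ∈ ooI D, a x ≠ 0 := fun x hx => (hapos x hx).ne'
  refine ⟨h, ⟨⟨?_, fun x hx => (hhd x hx).differentiableAt,
    fun x hx => (hhd2 x hx).differentiableAt, ?_⟩, ?_, hneg, fun x hx => ?_⟩, fun x hx => ?_⟩
  · intro x hx
    have h1 : ContinuousOn h (Icc 0 (x + 1)) :=
      ((Real.continuous_exp.comp H.c_cont.neg).continuousOn.mul (flux_cont H l _)).neg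
    have h2 := h1 x ⟨hx.1, by linarith⟩
    rw [ContinuousWithinAt] at h2 ⊢
    refine h2.mono_left (nhdsWithin_le_iff.2 ?_)
    filter_upwards [self_mem_nhdsWithin, mem_nhdsWithin_of_mem_nhds (Iio_mem_nhds
      (show x < x + 1 by linarith))] with y hy hy'
    exact ⟨hy.1, le_of_lt hy'⟩
  · refine ContinuousOn.congr ?_ fun x hx => (hhd2 x hx).deriv
    have hu : ContinuousOn (fun x => b x * h x + f x) (ooI D) := (hbcS.mul hhcS).add hfcS
    exact (((((hbC1'.mul hhcS).add (hbcS.mul (hu.neg.div hacS hane))).add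
      (continuousOn_const.mul hhcS)).neg.mul hacS).sub (hu.neg.mul haC1')).div (hacS.pow 2)
      fun x hx => pow_ne_zero 2 (hane x hx)
  · simp [hh, flux]
  · rw [(hhd x hx).deriv]
    have ha := hapos x hx
    have h1 : -(b x / a x) * h x = -(b x * h x) / a x := by ring
    rw [h1]
    exact div_lt_div_of_pos_right (by linarith [hpos x hx]) ha
  · have h1 : (fun y => a y * deriv h y + b y * h y) =ᶠ[𝓝 x] fun y => -f y := by
      filter_upwards [hSo.mem_nhds hx] with y hy
      rw [(hhd y hy).deriv]
      have := hane y hy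
      field_simp
      ring
    rw [Rbar, h1.deriv_eq, (hfd x hx).fun_neg.deriv, neg_neg, mul_div_assoc, div_self (hneg x hx).ne,
      mul_one]

/-- For `h ∈ C²` put `f = -(a h' + b h)` and `w = e^C h`.  If `R̄(h) ≥ l` then `f' ≤ l h`, and
`w' = -m f`. -/
lemma Rbar_system (H : Coeffs a b D c m)
    (haC1 : ∀ x ∈ ooI D, DifferentiableAt ℝ a x) (hbC1 : ∀ x ∈ ooI D, DifferentiableAt ℝ b x)
    (hapos : ∀ x ∈ ooI D, 0 < a x) {h : ℝ → ℝ} (hh : C2C D h) (hneg : ∀ x ∈ ooI D, h x < 0)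
    {l : ℝ} (hR : ∀ x ∈ ooI D, l ≤ Rbar a b h x) :
    ∃ f f' : ℝ → ℝ, (∀ x ∈ ooI D, f x = -(a x * deriv h x + b x * h x)) ∧
      (∀ x ∈ ooI D, HasDerivAt f (f' x) x ∧ f' x ≤ l * h x) ∧
      ∀ x ∈ ooI D, HasDerivAt (fun y => Real.exp (c y) * h y) (-(m x * f x)) x := by
  refine ⟨fun x => -(a x * deriv h x + b x * h x),
    fun x => -deriv (fun y => a y * deriv h y + b y * h y) x, fun _ _ => rfl, fun x hx => ⟨?_, ?_⟩,
    fun x hx => ?_⟩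
  · exact (((haC1 x hx).fun_mul (hh.2.2.1 x hx)).fun_add
      ((hbC1 x hx).fun_mul (hh.2.1 x hx))).hasDerivAt.fun_neg
  · exact (le_div_iff_of_neg (hneg x hx)).1 (hR x hx)
  · refine ((H.c_deriv x hx).exp.mul (hh.2.1 x hx).hasDerivAt).congr_deriv ?_
    have ha := (hapos x hx).ne'
    rw [H.m_eq x hx]
    field_simp
    ring

/-- Lower bound for `λ₀`.  With `P = l w / f ≤ 0` the Riccati inequality
`P' ≤ -l m - e^{-C} P²` holds, so for a test function `φ` completing the square gives
`l m φ² + (φ² P)' ≤ e^C φ'²`; the boundary terms have the favourable sign. -/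
lemma le_lam0_of_Rbar (H : Coeffs a b D c m)
    (haC1 : ∀ x ∈ ooI D, DifferentiableAt ℝ a x) (hbC1 : ∀ x ∈ ooI D, DifferentiableAt ℝ b x)
    (hapos : ∀ x ∈ ooI D, 0 < a x) {h : ℝ → ℝ} (hh : C2C D h) (hneg : ∀ x ∈ ooI D, h x < 0)
    (hfpos : ∀ x ∈ ooI D, 0 < -(a x * deriv h x + b x * h x))
    {l : ℝ} (hl : 0 < l) (hR : ∀ x ∈ ooI D, l ≤ Rbar a b h x) :
    ENNReal.ofReal l ≤ lam0 a b D := by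
  obtain ⟨f, f', hf, hfd, hwd⟩ := Rbar_system H haC1 hbC1 hapos hh hneg hR
  have hf0 : ∀ x ∈ ooI D, 0 < f x := fun x hx => (hf x hx).symm ▸ hfpos x hx
  refine le_sInf ?_
  rintro _ ⟨φ, hφ, ⟨p, hp0, hpD, hp⟩, -, hφ1, rfl⟩
  obtain ⟨q, hq, hpq⟩ := exists_gt_ooI hp0 hpD
  have hSm := (isOpen_ooI D).measurableSet
  have hφq : φ q = 0 := hp q hpq
  -- the estimate away from the left endpoint
  have key : ∀ ε, 0 < ε → ε < q → ENNReal.ofReal l * ∫⁻ x in Ioc ε q, ENNReal.ofReal (m x * φ x ^ 2)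
      ≤ Dform a b D φ := by
    intro ε hε hεq
    have hsub : Icc ε q ⊆ ooI D := fun x hx => ooI_down hq (hε.trans_le hx.1) hx.2
    have hsub' : Ioc ε q ⊆ ooI D := Ioc_subset_Icc_self.trans hsub
    have hφc : ContinuousOn φ (Icc ε q) := hφ.1.mono (hsub.trans (ooI_subset_ccI D))
    have hi1 : ContinuousOn (fun x => Real.exp (c x) * deriv φ x ^ 2) (Icc ε q) :=
      (Real.continuous_exp.comp H.c_cont).continuousOn.mul ((hφ.2.2.mono hsub).pow 2)
    have hi2 : ContinuousOn (fun x => m x * φ x ^ 2) (Icc ε q) :=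
      (H.m_cont.mono hsub).mul (hφc.pow 2)
    set w : ℝ → ℝ := fun y => Real.exp (c y) * h y with hw
    have hU : ∀ x ∈ Icc ε q, HasDerivAt (fun x => φ x ^ 2 * (l * w x / f x))
        (2 * φ x * deriv φ x * (l * w x / f x) +
          φ x ^ 2 * ((l * -(m x * f x) * f x - l * w x * f' x) / f x ^ 2)) x := by
      intro x hx
      have h1 := ((hφ.2.1 x (hsub hx)).hasDerivAt.fun_pow 2).fun_mul
        (((hwd x (hsub hx)).const_mul l).fun_div (hfd x (hsub hx)).1 (hf0 x (hsub hx)).ne')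
      refine h1.congr_deriv ?_
      simp
    have hmain := intervalIntegral.sub_le_integral_of_hasDeriv_right_of_le hεq.le
      (fun x hx => (hU x hx).continuousAt.continuousWithinAt)
      (fun x hx => (hU x (Ioo_subset_Icc_self hx)).hasDerivWithinAt)
      (φ := fun x => Real.exp (c x) * deriv φ x ^ 2 - l * (m x * φ x ^ 2))
      ((hi1.sub (continuousOn_const.mul hi2)).integrableOn_Icc) (fun x hx => by
        have hx := hsub (Ioo_subset_Icc_self hx)
        have hf0 := hf0 x hx
        have hw0 : w x < 0 := mul_neg_of_pos_of_neg (Real.exp_pos _) (hneg x hx)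
        have hE := Real.exp_pos (c x)
        have hEe : Real.exp (c x) * Real.exp (-c x) = 1 := by rw [← Real.exp_add]; simp
        have hhw : h x = Real.exp (-c x) * w x := by
          simp only [hw]
          linear_combination (-h x) * hEe
        set E := Real.exp (c x)
        set e := Real.exp (-c x)
        have he : 0 < e := Real.exp_pos _
        set P := l * w x / f x with hP
        have hff : f' x ≤ l * (e * w x) := hhw ▸ (hfd x hx).2
        -- the Riccati inequality for `P`
        have h1 : (l * -(m x * f x) * f x - l * w x * f' x) / f x ^ 2 ≤ -(l * m x) - e * P ^ 2 := by
          rw [div_le_iff₀ (by positivity), hP]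
          have : (-(l * m x) - e * (l * w x / f x) ^ 2) * f x ^ 2 =
              -(l * m x) * f x ^ 2 - e * (l * w x) ^ 2 := by
            field_simp
          rw [this]
          nlinarith [mul_le_mul_of_nonpos_left hff (mul_nonpos_of_nonneg_of_nonpos hl.le hw0.le)]
        have h2 := mul_le_mul_of_nonneg_left h1 (sq_nonneg (φ x))
        have h3 : 0 ≤ E * (deriv φ x - e * P * φ x) ^ 2 := by positivity
        have h4 : E * (deriv φ x - e * P * φ x) ^ 2 = E * deriv φ x ^ 2
            - 2 * φ x * deriv φ x * P + e * P ^ 2 * φ x ^ 2 := by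
          linear_combination (-2 * deriv φ x * P * φ x + e * P ^ 2 * φ x ^ 2) * hEe
        linarith)
    rw [hφq, intervalIntegral.integral_sub
      (ContinuousOn.intervalIntegrable (by rwa [uIcc_of_le hεq.le]))
      ((ContinuousOn.intervalIntegrable (by rwa [uIcc_of_le hεq.le])).const_mul l),
      intervalIntegral.integral_const_mul] at hmain
    have hb : φ ε ^ 2 * (l * w ε / f ε) ≤ 0 := by
      have hεS := hsub ⟨le_rfl, hεq.le⟩
      refine mul_nonpos_of_nonneg_of_nonpos (sq_nonneg _) (div_nonpos_of_nonpos_of_nonneg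
        (mul_nonpos_of_nonneg_of_nonpos hl.le ?_) (hf0 ε hεS).le)
      exact (mul_neg_of_pos_of_neg (Real.exp_pos _) (hneg ε hεS)).le
    have hreal : l * ∫ x in ε..q, m x * φ x ^ 2 ≤ ∫ x in ε..q, Real.exp (c x) * deriv φ x ^ 2 := by
      linarith
    have hD1 : ∫⁻ x in Ioc ε q, ENNReal.ofReal (Real.exp (c x) * deriv φ x ^ 2)
        ≤ Dform a b D φ := by
      rw [Dform_eq H]
      exact lintegral_mono_set hsub'
    refine le_trans ?_ hD1
    rw [← ofReal_integral_eq_lintegral_ofReal (hi2.integrableOn_Icc.mono_set Ioc_subset_Icc_self)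
      (ae_of_all _ fun x => mul_nonneg (H.m_nonneg x) (sq_nonneg _)),
      ← ofReal_integral_eq_lintegral_ofReal (hi1.integrableOn_Icc.mono_set Ioc_subset_Icc_self)
      (ae_of_all _ fun x => mul_nonneg (Real.exp_pos _).le (sq_nonneg _)),
      ← ENNReal.ofReal_mul hl.le, ← intervalIntegral.integral_of_le hεq.le,
      ← intervalIntegral.integral_of_le hεq.le]
    exact ENNReal.ofReal_le_ofReal hreal
  -- exhaust `(0, q]`
  have hq0 : 0 < q := hq.1
  have hmu : muL2 a b D φ = ∫⁻ x in Ioc 0 q, ENNReal.ofReal (m x * φ x ^ 2) := by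
    rw [muL2_eq H]
    refine setLIntegral_eq_of_vanish hSm measurableSet_Ioc
      (fun x hx => ooI_down hq hx.1 hx.2) (fun x hx hx' => ?_) fun _ _ => rfl
    rw [hp x (hpq.trans (not_le.1 fun h => hx' ⟨hx.1, h⟩))]
    simp
  have hUn : Ioc 0 q = ⋃ k : ℕ, Ioc (q / (k + 2)) q := by
    ext x
    simp only [mem_Ioc, mem_iUnion]
    constructor
    · rintro ⟨hx0, hxq⟩
      obtain ⟨k, hk⟩ := exists_nat_gt (q / x)
      refine ⟨k, ?_, hxq⟩
      rw [div_lt_iff₀ hx0] at hk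
      rw [div_lt_iff₀ (by positivity)]
      nlinarith
    · rintro ⟨k, hk, hxq⟩
      exact ⟨lt_trans (by positivity) hk, hxq⟩
  have hmono : Monotone fun k : ℕ => Ioc (q / (k + 2)) q := by
    intro j k hjk
    refine Ioc_subset_Ioc_left ?_
    have : (j : ℝ) ≤ k := by exact_mod_cast hjk
    gcongr
  rw [← mul_one (ENNReal.ofReal l), ← hφ1, hmu, hUn,
    setLIntegral_iUnion_of_directed _ hmono.directed_le, ENNReal.mul_iSup]
  refine iSup_le fun k => key _ (by positivity) ?_
  rw [div_lt_iff₀ (by positivity)]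
  nlinarith [(Nat.cast_nonneg k : (0 : ℝ) ≤ k)]

/-- When `μ(0, D) = ∞`, the condition `a h' + b h < 0` is automatic: if `f` became nonpositive it
would stay below some `-δ < 0`, and `w' = -m f ≥ δ m` would drive `w = e^C h` to `+∞`. -/
lemma pos_of_mu_infinite (H : Coeffs a b D c m)
    (haC1 : ∀ x ∈ ooI D, DifferentiableAt ℝ a x) (hbC1 : ∀ x ∈ ooI D, DifferentiableAt ℝ b x)
    (hapos : ∀ x ∈ ooI D, 0 < a x) {h : ℝ → ℝ} (hh : C2C D h) (hneg : ∀ x ∈ ooI D, h x < 0)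
    (hμ : muM a b D univ = ∞) {l : ℝ} (hl : 0 < l) (hR : ∀ x ∈ ooI D, l ≤ Rbar a b h x) :
    ∀ x ∈ ooI D, 0 < -(a x * deriv h x + b x * h x) := by
  have hSm := (isOpen_ooI D).measurableSet
  have hμm : ∫⁻ x in ooI D, ENNReal.ofReal (m x) = ∞ := by
    rw [← hμ, muM, withDensity_apply _ MeasurableSet.univ, Measure.restrict_univ]
    refine setLIntegral_congr_fun hSm fun x hx => ?_
    simp only [H.c_eq x hx, H.m_eq x hx]
  have hninf : ∀ T, ooI D ⊆ T → ¬ IntegrableOn m T := by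
    intro T hT hi
    have := (hi.mono_set hT).lintegral_lt_top
    rw [hμm] at this
    exact lt_irrefl _ this
  have hDtop : D = ∞ := by
    by_contra hD
    obtain ⟨p, hp0, hpD, hsub⟩ := ooI_inter_Iic D D.toReal
    refine hninf (Icc 0 p) (fun x hx => hsub ⟨hx, ?_⟩) ?_
    · exact (ENNReal.ofReal_le_iff_le_toReal hD).1 hx.2.le
    · exact (intervalIntegrable_iff_integrableOn_Icc_of_le hp0).1 (H.m_int 0 p)
  have hS : ∀ x, 0 < x → x ∈ ooI D := fun x hx => ⟨hx, by rw [hDtop]; exact ENNReal.ofReal_lt_top⟩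
  obtain ⟨f, f', hf, hfd, hwd⟩ := Rbar_system H haC1 hbC1 hapos hh hneg hR
  have hanti : StrictAntiOn f (Ioi 0) := by
    refine strictAntiOn_of_deriv_neg (convex_Ioi 0)
      (fun x hx => (hfd x (hS x hx)).1.continuousAt.continuousWithinAt) fun x hx => ?_
    rw [interior_Ioi] at hx
    rw [(hfd x (hS x hx)).1.deriv]
    exact (hfd x (hS x hx)).2.trans_lt (mul_neg_of_pos_of_neg hl (hneg x (hS x hx)))
  intro x₀ hx₀
  rw [← hf x₀ hx₀]
  by_contra! hle
  have hx₀0 : 0 < x₀ := hx₀.1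
  set x₁ := x₀ + 1 with hx₁
  have hx₁0 : 0 < x₁ := by positivity
  have hδ : f x₁ < 0 := (hanti hx₀0 hx₁0 (by linarith)).trans_le hle
  set w : ℝ → ℝ := fun y => Real.exp (c y) * h y with hw
  have hbound : ∀ x, x₁ ≤ x → ∫ t in x₁..x, ‖m t‖ ≤ -w x₁ / -f x₁ := by
    intro x hx
    have hx0 : 0 < x := hx₁0.trans_le hx
    have h1 := intervalIntegral.sub_le_integral_of_hasDeriv_right_of_le (g := fun y => -w y) hx
      (fun y hy => (hwd y (hS y (hx₁0.trans_le hy.1))).neg.continuousAt.continuousWithinAt)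
      (fun y hy => (hwd y (hS y (hx₁0.trans hy.1))).neg.hasDerivWithinAt)
      (φ := fun y => f x₁ * m y)
      ((intervalIntegrable_iff_integrableOn_Icc_of_le hx).1 ((H.m_int x₁ x).const_mul _))
      (fun y hy => by
        have h2 : f y ≤ f x₁ := (hanti hx₁0 (hx₁0.trans hy.1) hy.1).le
        nlinarith [mul_le_mul_of_nonneg_left h2 (H.m_nonneg y)])
    rw [intervalIntegral.integral_const_mul] at h1
    have hwx : w x < 0 := mul_neg_of_pos_of_neg (Real.exp_pos _) (hneg x (hS x hx0))
    simp only [Real.norm_of_nonneg (H.m_nonneg _)]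
    rw [le_div_iff₀ (by linarith)]
    linarith
  have hIoi : IntegrableOn m (Ioi x₁) :=
    integrableOn_Ioi_of_intervalIntegral_norm_bounded (l := atTop) (b := id) (-w x₁ / -f x₁) x₁
      (fun x => (H.m_int x₁ x).1) tendsto_id ((eventually_ge_atTop x₁).mono hbound)
  have hIoc : IntegrableOn m (Ioc 0 x₁) := (H.m_int 0 x₁).1
  refine hninf _ (fun x hx => ?_) (hIoc.union hIoi)
  rw [Ioc_union_Ioi_eq_Ioi hx₁0.le]
  exact hx.1

end

/-- `inf R̄(h) ≤ λ₀` as soon as a positive lower bound for `R̄(h)` forces `a h' + b h < 0`. -/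
lemma iInf_Rbar_le {a b : ℝ → ℝ} {D : ℝ≥0∞} {c m : ℝ → ℝ} (H : Coeffs a b D c m)
    (haC1 : ∀ x ∈ ooI D, DifferentiableAt ℝ a x) (hbC1 : ∀ x ∈ ooI D, DifferentiableAt ℝ b x)
    (hapos : ∀ x ∈ ooI D, 0 < a x) {h : ℝ → ℝ} (hh : C2C D h) (hneg : ∀ x ∈ ooI D, h x < 0)
    (hfpos : ∀ l : ℝ, 0 < l → (∀ x ∈ ooI D, l ≤ Rbar a b h x) →
      ∀ x ∈ ooI D, 0 < -(a x * deriv h x + b x * h x)) :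
    (⨅ x ∈ ooI D, ((Rbar a b h x : ℝ) : EReal)) ≤ (lam0 a b D : EReal) := by
  by_contra! hlt
  obtain ⟨l, hl1, hl2⟩ := EReal.lt_iff_exists_real_btwn.1 hlt
  have hl0 : 0 < l := by
    have : (0 : EReal) < l := (EReal.coe_ennreal_nonneg _).trans_lt hl1
    exact_mod_cast this
  have hR : ∀ x ∈ ooI D, l ≤ Rbar a b h x := fun x hx =>
    EReal.coe_le_coe_iff.1 (hl2.le.trans (iInf₂_le x hx))
  have := le_lam0_of_Rbar H haC1 hbC1 hapos hh hneg (hfpos l hl0 hR) hl0 hR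
  rw [← EReal.coe_ennreal_le_coe_ennreal_iff, EReal.coe_ennreal_ofReal, max_eq_left hl0.le] at this
  exact absurd this (not_le.2 hl1)


/-! ### The variational formula -/

/-- Proposition 2.3: the variational formula for the ND principal eigenvalue via the
operator `R̄`. -/
theorem nd_Rbar_variational_formula
    (a b : ℝ → ℝ) (D : ℝ≥0∞) (hD : 0 < D) (hyp : Hyp a b D)
    (haC : ContinuousOn a (ccI D)) (hbC : ContinuousOn b (ccI D))
    (haC1 : ∀ x ∈ ooI D, DifferentiableAt ℝ a x) (haC1' : ContinuousOn (deriv a) (ooI D))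
    (hbC1 : ∀ x ∈ ooI D, DifferentiableAt ℝ b x) (hbC1' : ContinuousOn (deriv b) (ooI D))
    (hapos : ∀ x ∈ ooI D, 0 < a x) :
    ((lam0 a b D : EReal) ≤ ⨆ h ∈ Hbar D, ⨅ x ∈ ooI D, ((Rbar a b h x : ℝ) : EReal)) ∧
    (muM a b D Set.univ = ∞ →
      (⨆ h ∈ Hbar D, ⨅ x ∈ ooI D, ((Rbar a b h x : ℝ) : EReal)) = (lam0 a b D : EReal)) ∧
    (⨆ h ∈ Hstar a b D, ⨅ x ∈ ooI D, ((Rbar a b h x : ℝ) : EReal)) = (lam0 a b D : EReal) ∧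
    ∃ h ∈ Hstar a b D,
      (⨅ x ∈ ooI D, ((Rbar a b h x : ℝ) : EReal)) = (lam0 a b D : EReal) := by
  obtain ⟨c, m, H⟩ := exists_coeffs hyp haC hbC
  have hle : (⨆ h ∈ Hstar a b D, ⨅ x ∈ ooI D, ((Rbar a b h x : ℝ) : EReal)) ≤ lam0 a b D :=
    iSup₂_le fun h hh => iInf_Rbar_le H haC1 hbC1 hapos hh.1 hh.2.2.1 fun _ _ _ x hx => by
      have h1 := hh.2.2.2 x hx
      have ha := hapos x hx
      have h2 := mul_lt_mul_of_pos_left h1 ha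
      have h3 : a x * (-(b x / a x) * h x) = -(b x * h x) := by field_simp
      linarith
  have hatt : ∃ h ∈ Hstar a b D,
      (⨅ x ∈ ooI D, ((Rbar a b h x : ℝ) : EReal)) = (lam0 a b D : EReal) := by
    have hl := ENNReal.ofReal_toReal (lam0_ne_top H hD)
    obtain ⟨h, hh, hR⟩ := extremal H haC1 haC1' hbC1 hbC1' hapos
      (eigF_pos H ENNReal.toReal_nonneg hl)
    refine ⟨h, hh, ?_⟩
    obtain ⟨y, hy, -⟩ := exists_gt_ooI le_rfl (by simpa using hD)
    rw [biInf_congr fun x hx => by rw [hR x hx], biInf_const ⟨y, hy⟩, ← hl,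
      EReal.coe_ennreal_ofReal, max_eq_left ENNReal.toReal_nonneg, hl]
  have hge : (lam0 a b D : EReal) ≤ ⨆ h ∈ Hstar a b D, ⨅ x ∈ ooI D, ((Rbar a b h x : ℝ) : EReal) := by
    obtain ⟨h, hh, hR⟩ := hatt
    rw [← hR]
    exact le_iSup₂_of_le h hh le_rfl
  have hsub : Hstar a b D ⊆ Hbar D := fun h hh => ⟨hh.2.1, hh.1, hh.2.2.1⟩
  have hbar := hge.trans (biSup_mono hsub)
  refine ⟨hbar, fun hμ => le_antisymm ?_ hbar, le_antisymm hle hge, hatt⟩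
  exact iSup₂_le fun h hh => iInf_Rbar_le H haC1 hbC1 hapos hh.2.1 hh.2.2 fun l hl hR =>
    pos_of_mu_infinite H haC1 hbC1 hapos hh.2.1 hh.2.2 hμ hl hR
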